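/- Let A be an n×n real matrix, B an n×m real matrix, and λ_1,…,λ_n a conjugate-ordered list of complex numbers with 2s non-real entries. Let V′ be a complex n×n matrix and W′ a complex m×n matrix whose j-th columns v_j, w_j satisfy (A − λ_j I_n) v_j + B w_j = 0 for every j, such that v_{i+1} = conj(v_i) and w_{i+1} = conj(w_i) for every odd i ≤ 2s, and v_j, w_j have real entries for j > 2s. Let V be the realification of V′ and W the realification of W′, and assume V is invertible. Then the real m×n gain matrix F := W V^{-1} satisfies (A + B F) V′ = V′ Λ, where Λ = diag(λ_1,…,λ_n); in particular V′ is invertible and A + BF is non-defective with eigenvalues λ_1,…,λ_n. -/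

import Mathlib

/-!
Call a complex matrix conjugate-ordered if its leading `2 * s` columns come in conjugate pairs and
the remaining ones are real. Realification commutes with left multiplication by a real matrix
(`realify_toC_mul`) and is injective on conjugate-ordered matrices (`ConjOrdered.ext`). With
`F = W V⁻¹`, both `F V'` and `W'` are conjugate-ordered with realification `W`, so `F V' = W'`, and
the column equations `A v_j + B w_j = λ_j v_j` read `(A + B F) V' = V' Λ`.

For the invertibility of `V'`, each column of `V` is a complex linear combination of columns
of `V'` (`ConjOrdered.realify_eq`), so a left null vector of `V'` is also one of `V`, hence zero.
-/

open Matrix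

/-- Entrywise coercion of a real matrix to a complex matrix. -/
def toC {k l : ℕ} (M : Matrix (Fin k) (Fin l) ℝ) : Matrix (Fin k) (Fin l) ℂ :=
  M.map (fun x => (x : ℂ))

/-- The realification of a complex matrix whose columns are conjugate-ordered with
`2*s` leading "complex" columns: for even `j < 2*s` (0-based) the columns `j`, `j+1`
of the result are `Re`, `Im` of column `j` of `M`; for `j ≥ 2*s` the column is the
(real) column of `M`. -/
def realify {k n : ℕ} (s : ℕ) (M : Matrix (Fin k) (Fin n) ℂ) :
    Matrix (Fin k) (Fin n) ℝ := fun i j =>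
  if j.val < 2 * s ∧ j.val % 2 = 1 then
    (M i ⟨j.val - 1, lt_of_le_of_lt (Nat.sub_le _ _) j.isLt⟩).im
  else (M i j).re

/-- The leading `2 * s` columns of `M` form consecutive conjugate pairs (an even 0-based index
followed by its successor), and all later columns are real. -/
structure ConjOrdered {k n : ℕ} (s : ℕ) (M : Matrix (Fin k) (Fin n) ℂ) : Prop where
  conj : ∀ (i : Fin n) (h : i.val + 1 < n), i.val % 2 = 0 → i.val < 2 * s →
    ∀ r, M r ⟨i.val + 1, h⟩ = (starRingEnd ℂ) (M r i)
  real : ∀ j : Fin n, 2 * s ≤ j.val → ∀ r, (M r j).im = 0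

theorem toC_mul {k l p : ℕ} (M : Matrix (Fin k) (Fin l) ℝ) (N : Matrix (Fin l) (Fin p) ℝ) :
    toC (M * N) = toC M * toC N := by
  ext i j
  simp [toC, Matrix.mul_apply]

theorem toC_add {k l : ℕ} (M N : Matrix (Fin k) (Fin l) ℝ) :
    toC (M + N) = toC M + toC N := by
  ext i j
  simp [toC]

theorem toC_mul_re {k l n : ℕ} (G : Matrix (Fin k) (Fin l) ℝ) (M : Matrix (Fin l) (Fin n) ℂ)
    (i : Fin k) (j : Fin n) : ((toC G * M) i j).re = ∑ r, G i r * (M r j).re := by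
  simp [toC, Matrix.mul_apply]

theorem toC_mul_im {k l n : ℕ} (G : Matrix (Fin k) (Fin l) ℝ) (M : Matrix (Fin l) (Fin n) ℂ)
    (i : Fin k) (j : Fin n) : ((toC G * M) i j).im = ∑ r, G i r * (M r j).im := by
  simp [toC, Matrix.mul_apply]

theorem realify_toC_mul {k l n : ℕ} (s : ℕ) (G : Matrix (Fin k) (Fin l) ℝ)
    (M : Matrix (Fin l) (Fin n) ℂ) : realify s (toC G * M) = G * realify s M := by
  ext i j
  rw [Matrix.mul_apply]
  unfold realify
  split_ifs
  · exact toC_mul_im G M i _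
  · exact toC_mul_re G M i j

theorem ConjOrdered.toC_mul {k l n s : ℕ} (G : Matrix (Fin k) (Fin l) ℝ)
    {M : Matrix (Fin l) (Fin n) ℂ} (hM : ConjOrdered s M) : ConjOrdered s (toC G * M) where
  conj i h he hi r := by
    simp [toC, Matrix.mul_apply, hM.conj i h he hi]
  real j hj r := by
    simp [toC_mul_im, hM.real j hj]

theorem realify_re {k n s : ℕ} (M : Matrix (Fin k) (Fin n) ℂ) (i : Fin k) (j : Fin n)
    (hj : ¬ (j.val < 2 * s ∧ j.val % 2 = 1)) : realify s M i j = (M i j).re :=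
  if_neg hj

theorem realify_succ_im {k n s : ℕ} (M : Matrix (Fin k) (Fin n) ℂ) (i : Fin k) (j : Fin n)
    (h : j.val + 1 < n) (he : j.val % 2 = 0) (hj : j.val < 2 * s) :
    realify s M i ⟨j.val + 1, h⟩ = (M i j).im :=
  if_pos ⟨by dsimp only; omega, by dsimp only; omega⟩

/-- Every column index is real, the first of a conjugate pair, or the second of one. -/
theorem index_cases {n s : ℕ} (hs : 2 * s ≤ n) (j : Fin n) :
    2 * s ≤ j.val ∨ (j.val + 1 < n ∧ j.val % 2 = 0 ∧ j.val < 2 * s) ∨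
      ∃ (i : Fin n) (h : i.val + 1 < n), i.val % 2 = 0 ∧ i.val < 2 * s ∧ j = ⟨i.val + 1, h⟩ := by
  obtain ⟨j, hj⟩ := j
  dsimp only
  by_cases h1 : 2 * s ≤ j
  · exact Or.inl h1
  by_cases h2 : j % 2 = 0
  · exact Or.inr (Or.inl ⟨by omega, h2, by omega⟩)
  refine Or.inr (Or.inr ⟨⟨j - 1, by omega⟩, ?_, ?_, ?_, ?_⟩)
  · dsimp only; omega
  · dsimp only; omega
  · dsimp only; omega
  · ext; dsimp only; omega

theorem ConjOrdered.ext {k n s : ℕ} (hs : 2 * s ≤ n) {M N : Matrix (Fin k) (Fin n) ℂ}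
    (hM : ConjOrdered s M) (hN : ConjOrdered s N) (h : realify s M = realify s N) : M = N := by
  have key : ∀ (r : Fin k) (i : Fin n), i.val + 1 < n → i.val % 2 = 0 → i.val < 2 * s →
      M r i = N r i := by
    intro r i hi he hlt
    apply Complex.ext
    · rw [← realify_re (s := s) M r i (by omega), ← realify_re (s := s) N r i (by omega), h]
    · rw [← realify_succ_im M r i hi he hlt, ← realify_succ_im N r i hi he hlt, h]
  ext r j
  rcases index_cases hs j with hj | ⟨hj, he, hlt⟩ | ⟨i, hi, he, hlt, rfl⟩
  · apply Complex.ext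
    · rw [← realify_re (s := s) M r j (by omega), ← realify_re (s := s) N r j (by omega), h]
    · rw [hM.real j hj, hN.real j hj]
  · exact key r j hj he hlt
  · rw [hM.conj i hi he hlt, hN.conj i hi he hlt, key r i hi he hlt]

theorem ConjOrdered.realify_eq {k n s : ℕ} (hs : 2 * s ≤ n) {M : Matrix (Fin k) (Fin n) ℂ}
    (hM : ConjOrdered s M) (j : Fin n) :
    ∃ (a b : Fin n) (α β : ℂ), ∀ r, toC (realify s M) r j = M r a * α + M r b * β := by
  rcases index_cases hs j with hj | ⟨hj, he, hlt⟩ | ⟨i, hi, he, hlt, rfl⟩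
  · refine ⟨j, j, 1, 0, fun r => ?_⟩
    have h0 := hM.real j hj r
    apply Complex.ext <;> simp [toC, realify_re (s := s) M r j (by omega), h0]
  -- `Re z = (z + conj z) / 2`
  · refine ⟨j, ⟨j.val + 1, hj⟩, 1 / 2, 1 / 2, fun r => ?_⟩
    rw [hM.conj j hj he hlt]
    simp only [toC, Matrix.map_apply, realify_re (s := s) M r j (by omega),
      Complex.re_eq_add_conj]
    ring
  -- `Im z = (z - conj z) / (2 i)`
  · refine ⟨i, ⟨i.val + 1, hi⟩, 1 / (2 * Complex.I), -(1 / (2 * Complex.I)), fun r => ?_⟩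
    rw [hM.conj i hi he hlt]
    simp only [toC, Matrix.map_apply, realify_succ_im M r i hi he hlt, Complex.im_eq_sub_conj]
    ring

theorem ConjOrdered.isUnit_det {n s : ℕ} (hs : 2 * s ≤ n) {M : Matrix (Fin n) (Fin n) ℂ}
    (hM : ConjOrdered s M) (h : IsUnit (realify s M).det) : IsUnit M.det := by
  rw [isUnit_iff_ne_zero]
  intro h0
  obtain ⟨x, hx, hxM⟩ := Matrix.exists_vecMul_eq_zero_iff.mpr h0
  have hcol : ∀ a, ∑ r, x r * M r a = 0 := fun a => congrFun hxM a
  have hxV : x ᵥ* toC (realify s M) = 0 := by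
    funext j
    obtain ⟨a, b, α, β, hab⟩ := hM.realify_eq hs j
    change ∑ r, x r * toC (realify s M) r j = 0
    simp only [hab, mul_add, ← mul_assoc, Finset.sum_add_distrib, ← Finset.sum_mul, hcol,
      zero_mul, add_zero]
  have hdet : (toC (realify s M)).det = 0 :=
    Matrix.exists_vecMul_eq_zero_iff.mp ⟨x, hx, hxV⟩
  have hmap : (toC (realify s M)).det = ((realify s M).det : ℂ) :=
    (RingHom.map_det Complex.ofRealHom (realify s M)).symm
  rw [hmap, Complex.ofReal_eq_zero] at hdet
  exact h.ne_zero hdet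

/-- If the columns of `V'`, `W'` solve `(A - λ_j I) v_j + B w_j = 0`
with the conjugate-pairing structure, and the realification `V` of `V'` is invertible,
then `F = W V⁻¹` places the poles: `(A + BF) V' = V' Λ`, and `V'` is invertible
(so `A + BF` is non-defective with eigenvalues `λ_1, …, λ_n`). -/
theorem moore_parametric_gain {n m : ℕ} (s : ℕ) (hs : 2 * s ≤ n)
    (A : Matrix (Fin n) (Fin n) ℝ) (B : Matrix (Fin n) (Fin m) ℝ)
    (lam : Fin n → ℂ)
    (hnonreal : ∀ j : Fin n, j.val < 2 * s → (lam j).im ≠ 0)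
    (hconj : ∀ (i : Fin n) (h : i.val + 1 < n), i.val % 2 = 0 → i.val < 2 * s →
      lam ⟨i.val + 1, h⟩ = (starRingEnd ℂ) (lam i))
    (hreal : ∀ j : Fin n, 2 * s ≤ j.val → (lam j).im = 0)
    (V' : Matrix (Fin n) (Fin n) ℂ) (W' : Matrix (Fin m) (Fin n) ℂ)
    (hcol : ∀ j : Fin n,
      (toC A - lam j • (1 : Matrix (Fin n) (Fin n) ℂ)) *ᵥ (fun i => V' i j)
        + toC B *ᵥ (fun i => W' i j) = 0)
    (hVconj : ∀ (i : Fin n) (h : i.val + 1 < n), i.val % 2 = 0 → i.val < 2 * s →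
      ∀ r, V' r ⟨i.val + 1, h⟩ = (starRingEnd ℂ) (V' r i))
    (hWconj : ∀ (i : Fin n) (h : i.val + 1 < n), i.val % 2 = 0 → i.val < 2 * s →
      ∀ r, W' r ⟨i.val + 1, h⟩ = (starRingEnd ℂ) (W' r i))
    (hVreal : ∀ j : Fin n, 2 * s ≤ j.val → ∀ r, (V' r j).im = 0)
    (hWreal : ∀ j : Fin n, 2 * s ≤ j.val → ∀ r, (W' r j).im = 0)
    (hV : IsUnit (realify s V').det) :
    toC (A + B * (realify s W' * (realify s V')⁻¹)) * V' = V' * Matrix.diagonal lam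
      ∧ IsUnit V'.det := by
  have hVo : ConjOrdered s V' := ⟨hVconj, hVreal⟩
  have hWo : ConjOrdered s W' := ⟨hWconj, hWreal⟩
  refine ⟨?_, hVo.isUnit_det hs hV⟩
  have hF : toC (realify s W' * (realify s V')⁻¹) * V' = W' := by
    refine (hVo.toC_mul _).ext hs hWo ?_
    rw [realify_toC_mul, Matrix.mul_assoc, Matrix.nonsing_inv_mul _ hV, Matrix.mul_one]
  rw [toC_add, toC_mul, Matrix.add_mul, Matrix.mul_assoc, hF]
  ext i j
  have h := congrFun (hcol j) i
  rw [Matrix.sub_mulVec, Matrix.smul_mulVec, Matrix.one_mulVec] at h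
  have h' : (toC A * V') i j - lam j * V' i j + (toC B * W') i j = 0 := h
  rw [Matrix.mul_diagonal, Matrix.add_apply]
  linear_combination h'
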